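/- Let d ≥ 2, k ≥ 2, 1 ≤ t ≤ k−1, let ψ ∈ ℂ^d be a unit vector with projector P = |ψ⟩⟨ψ|, let Ω = P + λ(I − P) with λ ∈ [0,1), and let 0 ≤ ε ≤ (d−1)/d with q = dε/(d−1). For the globally white-noisy ensemble state η = (1−q)(|ψ⟩⟨ψ|)^{⊗k} + q·I/d^k, with S_k the cyclic-shift unitary and D_k = (I + S_k)/2, one has tr[(Ω^{⊗t} ⊗ P ⊗ I^{⊗(k−t−1)}) · D_k η D_k†] = (1−q) + (q/2)[(λ + (1−λ)/d)^t/d + 1/d^k]. -/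

import Mathlib

open Matrix Kronecker BigOperators

noncomputable section

/-- The cyclically previous index: `m - 1 (mod k)`. -/
def prevIdx {k : ℕ} (m : Fin k) : Fin k :=
  ⟨(m.val + (k - 1)) % k, Nat.mod_lt _ m.pos⟩

/-- The cyclic-shift unitary `S_k` on `(ℂ^d)^{⊗k}`, determined by
`S_k (v_1 ⊗ ⋯ ⊗ v_k) = v_k ⊗ v_1 ⊗ ⋯ ⊗ v_{k-1}`, written as a matrix in the
standard tensor-product basis indexed by functions `Fin k → Fin d`. -/
def cyc (d k : ℕ) : Matrix (Fin k → Fin d) (Fin k → Fin d) ℂ :=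
  fun g f => if g = fun m => f (prevIdx m) then 1 else 0

/-- The SWAP projection `D_k = (I + S_k)/2`. -/
def Dk (d k : ℕ) : Matrix (Fin k → Fin d) (Fin k → Fin d) ℂ :=
  (1 / 2 : ℂ) • (1 + cyc d k)

/-- The tensor product `A_1 ⊗ A_2 ⊗ ⋯ ⊗ A_k` of `d × d` matrices, acting
factor-wise on `(ℂ^d)^{⊗k}`. -/
def tensOp {d k : ℕ} (A : Fin k → Matrix (Fin d) (Fin d) ℂ) :
    Matrix (Fin k → Fin d) (Fin k → Fin d) ℂ :=
  fun g f => ∏ m, A m (g m) (f m)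

/-- The tensor product `v_1 ⊗ ⋯ ⊗ v_k` of vectors in `ℂ^d`. -/
def tensVec {d k : ℕ} (v : Fin k → (Fin d → ℂ)) : (Fin k → Fin d) → ℂ :=
  fun f => ∏ m, v m (f m)

/-- The partial trace over the last `k - 1` tensor factors, mapping matrices on
`(ℂ^d)^{⊗k}` to `d × d` matrices by tracing out factors `2` through `k`. -/
def ptraceFirst {d k : ℕ} (M : Matrix (Fin k → Fin d) (Fin k → Fin d) ℂ) :
    Matrix (Fin d) (Fin d) ℂ :=
  fun a b => ∑ r : {i : Fin k // i.val ≠ 0} → Fin d,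
    M (fun m => if h : m.val = 0 then a else r ⟨m, h⟩)
      (fun m => if h : m.val = 0 then b else r ⟨m, h⟩)

/-!
The tensor power of a rank-one matrix `v wᵀ` is absorbed by the cyclic shift `S`, so the signal part
of the state passes through `D = (1 + S) / 2` unchanged. On the white noise `D` acts as
`D Dᴴ = (2 + S + Sᴴ) / 4`, and the trace of `(A_1 ⊗ ⋯ ⊗ A_k) S` is the trace of the ordinary product
`A_k ⋯ A_1`. Every test operator fixes `ψ` and one of them is `|ψ⟩⟨ψ|`; rotating that factor to the
front shows that both shifted traces equal `1`.
-/

lemma prod_ite_lt_ite_eq {M : Type*} [CommMonoid M] {k t : ℕ} (ht : t < k) (a b : M) :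
    ∏ m : Fin k, (if m.val < t then a else if m.val = t then b else 1) = a ^ t * b := by
  obtain ⟨r, rfl⟩ := Nat.exists_eq_add_of_lt ht
  rw [Fin.prod_univ_eq_prod_range (fun m => if m < t then a else if m = t then b else 1),
    add_assoc, Finset.prod_range_add, Finset.prod_range_succ']
  congr 1
  · rw [Finset.prod_congr rfl fun m hm => if_pos (Finset.mem_range.mp hm), Finset.prod_const,
      Finset.card_range]
  · simp

section MatrixProducts

variable {n R : Type*} [Fintype n] [CommSemiring R]

lemma list_prod_mulVec_eq_self [DecidableEq n] {l : List (Matrix n n R)} {v : n → R}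
    (hl : ∀ A ∈ l, A *ᵥ v = v) : l.prod *ᵥ v = v :=
  List.prod_induction (fun A => A *ᵥ v = v)
    (fun A B hA hB => by rw [← mulVec_mulVec, hB, hA]) (one_mulVec v) hl

lemma trace_vecMulVec_mul_eq_one {v w : n → R} {A : Matrix n n R} (hvw : w ⬝ᵥ v = 1)
    (hA : A *ᵥ v = v) : (vecMulVec v w * A).trace = 1 := by
  rw [vecMulVec_mul, trace_vecMulVec, dotProduct_comm, ← dotProduct_mulVec, hA, hvw]

lemma trace_list_prod_eq_one_of_vecMulVec_mem [DecidableEq n] {l : List (Matrix n n R)}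
    {v w : n → R} (hvw : w ⬝ᵥ v = 1) (hl : ∀ A ∈ l, A *ᵥ v = v) (hmem : vecMulVec v w ∈ l) :
    l.prod.trace = 1 := by
  obtain ⟨l₁, l₂, rfl⟩ := List.append_of_mem hmem
  have hrot : (l₁ ++ vecMulVec v w :: l₂).prod.trace
      = (vecMulVec v w * (l₂ ++ l₁).prod).trace := by
    rw [List.prod_append, trace_mul_comm, List.prod_cons, List.prod_append, Matrix.mul_assoc]
  rw [hrot]
  refine trace_vecMulVec_mul_eq_one hvw (list_prod_mulVec_eq_self fun A hA => hl A ?_)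
  simp only [List.mem_append, List.mem_cons] at hA ⊢
  tauto

lemma sum_mul_prod_path_eq_trace [DecidableEq n] {m : ℕ} (A : Fin m → Matrix n n R)
    (B : Matrix n n R) :
    ∑ g : Fin (m + 1) → n, B (g 0) (g (Fin.last m)) * ∏ i, A i (g i.succ) (g i.castSucc)
      = (B * (List.ofFn A).reverse.prod).trace := by
  induction m generalizing B with
  | zero =>
    rw [← (Equiv.funUnique (Fin 1) n).symm.sum_comp]
    simp [Matrix.trace]
  | succ m ih =>
    have hprod : B * (List.ofFn A).reverse.prod
        = B * A (Fin.last m) * (List.ofFn fun i => A i.castSucc).reverse.prod := by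
      rw [List.ofFn_succ', List.concat_eq_append, List.reverse_concat', List.prod_cons,
        Matrix.mul_assoc]
    rw [hprod, ← ih, ← (Fin.snocEquiv fun _ => n).sum_comp, Fintype.sum_prod_type,
      Finset.sum_comm]
    refine Finset.sum_congr rfl fun g _ => ?_
    rw [Matrix.mul_apply, Finset.sum_mul]
    refine Finset.sum_congr rfl fun x _ => ?_
    rw [Fin.prod_univ_castSucc, ← Fin.castSucc_zero]
    simp only [Fin.snocEquiv, Equiv.coe_fn_mk, Fin.snoc_last, Fin.snoc_castSucc,
      Fin.succ_castSucc, Fin.succ_last]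
    ring

end MatrixProducts

section TensorProduct

variable {d k : ℕ}

lemma tensOp_mul_tensOp (A B : Fin k → Matrix (Fin d) (Fin d) ℂ) :
    tensOp A * tensOp B = tensOp fun m => A m * B m := by
  ext g f
  simp only [tensOp, Matrix.mul_apply, ← Finset.prod_mul_distrib, Fintype.prod_sum]

lemma trace_tensOp (A : Fin k → Matrix (Fin d) (Fin d) ℂ) :
    (tensOp A).trace = ∏ m, (A m).trace := by
  simp only [tensOp, Matrix.trace, Matrix.diag, Fintype.prod_sum]

lemma transpose_tensOp (A : Fin k → Matrix (Fin d) (Fin d) ℂ) :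
    (tensOp A)ᵀ = tensOp fun m => (A m)ᵀ := rfl

lemma trace_tensOp_mul_tensOp_vecMulVec {A : Fin k → Matrix (Fin d) (Fin d) ℂ} {v w : Fin d → ℂ}
    (hvw : w ⬝ᵥ v = 1) (hA : ∀ m, A m *ᵥ v = v) :
    (tensOp A * tensOp fun _ => vecMulVec v w).trace = 1 := by
  rw [tensOp_mul_tensOp, trace_tensOp]
  refine Finset.prod_eq_one fun m _ => ?_
  rw [trace_mul_comm, trace_vecMulVec_mul_eq_one hvw (hA m)]

end TensorProduct

section CyclicShift

variable {d k : ℕ}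

lemma prevIdx_eq_finRotate_symm (m : Fin k) : prevIdx m = (finRotate k).symm m := by
  have := m.neZero
  rw [Equiv.eq_symm_apply, finRotate_apply]
  ext
  have hk : m.val + (k - 1) + 1 = m.val + k := by have := m.pos; omega
  rw [Fin.val_add, Fin.val_one', prevIdx, ← Nat.add_mod, hk, Nat.add_mod_right,
    Nat.mod_eq_of_lt m.isLt]

lemma cyc_eq_permMatrix :
    cyc d k = Equiv.Perm.permMatrix ℂ ((finRotate k).symm.arrowCongr (Equiv.refl (Fin d))) := by
  ext g f
  have hiff : (g = fun m => f (prevIdx m)) ↔ g ∘ finRotate k = f := by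
    simp only [prevIdx_eq_finRotate_symm]
    exact Equiv.eq_comp_symm _ _ _
  simp only [cyc, hiff, PEquiv.toMatrix_apply, Equiv.toPEquiv_apply, Option.mem_some_iff]
  rfl

lemma cyc_mul_apply (M : Matrix (Fin k → Fin d) (Fin k → Fin d) ℂ) (g f : Fin k → Fin d) :
    (cyc d k * M) g f = M (g ∘ finRotate k) f := by
  rw [cyc_eq_permMatrix, PEquiv.toMatrix_toPEquiv_mul]
  rfl

lemma mul_cyc_apply (M : Matrix (Fin k → Fin d) (Fin k → Fin d) ℂ) (g f : Fin k → Fin d) :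
    (M * cyc d k) g f = M g (f ∘ (finRotate k).symm) := by
  rw [cyc_eq_permMatrix, PEquiv.mul_toMatrix_toPEquiv]
  rfl

lemma conjTranspose_cyc : (cyc d k)ᴴ = (cyc d k)ᵀ := by
  rw [cyc_eq_permMatrix, conjTranspose_permMatrix, transpose_permMatrix]

lemma cyc_mul_transpose_cyc : cyc d k * (cyc d k)ᵀ = 1 := by
  rw [cyc_eq_permMatrix, transpose_permMatrix, ← permMatrix_mul, inv_mul_cancel, permMatrix_one]

lemma cyc_mul_tensOp_vecMulVec (v w : Fin d → ℂ) :
    (cyc d k * tensOp fun _ => vecMulVec v w) = tensOp fun _ => vecMulVec v w := by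
  ext g f
  simp only [cyc_mul_apply, tensOp, vecMulVec_apply, Finset.prod_mul_distrib, Function.comp_apply]
  rw [Equiv.prod_comp (finRotate k) fun m => v (g m)]

lemma trace_tensOp_mul_cyc (A : Fin (k + 1) → Matrix (Fin d) (Fin d) ℂ) :
    (tensOp A * cyc d (k + 1)).trace = (List.ofFn A).reverse.prod.trace := by
  have hprev (i : Fin k) : (finRotate (k + 1)).symm i.succ = i.castSucc := by
    rw [Equiv.symm_apply_eq, finRotate_apply, Fin.coeSucc_eq_succ]
  have hlast : (finRotate (k + 1)).symm 0 = Fin.last k := by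
    rw [Equiv.symm_apply_eq, finRotate_last]
  rw [List.ofFn_succ, List.reverse_cons, List.prod_append, List.prod_singleton,
    trace_mul_comm _ (A 0), ← sum_mul_prod_path_eq_trace]
  simp only [Matrix.trace, Matrix.diag, mul_cyc_apply, tensOp, Fin.prod_univ_succ,
    Function.comp_apply, hprev, hlast]

lemma trace_tensOp_mul_transpose_cyc (A : Fin (k + 1) → Matrix (Fin d) (Fin d) ℂ) :
    (tensOp A * (cyc d (k + 1))ᵀ).trace = (List.ofFn A).prod.trace := by
  rw [← trace_transpose, transpose_mul, transpose_transpose, trace_mul_comm, transpose_tensOp,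
    trace_tensOp_mul_cyc, ← trace_transpose (List.ofFn A).prod, transpose_list_prod, List.map_ofFn]
  rfl

variable {A : Fin k → Matrix (Fin d) (Fin d) ℂ} {v w : Fin d → ℂ} {j : Fin k}

lemma trace_tensOp_mul_cyc_eq_one (hvw : w ⬝ᵥ v = 1) (hA : ∀ m, A m *ᵥ v = v)
    (hj : A j = vecMulVec v w) : (tensOp A * cyc d k).trace = 1 := by
  cases k with
  | zero => exact j.elim0
  | succ k =>
    rw [trace_tensOp_mul_cyc]
    apply trace_list_prod_eq_one_of_vecMulVec_mem hvw
    · simpa only [List.mem_reverse, List.forall_mem_ofFn_iff] using hA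
    · exact List.mem_reverse.mpr (List.mem_ofFn.mpr ⟨j, hj⟩)

lemma trace_tensOp_mul_transpose_cyc_eq_one (hvw : w ⬝ᵥ v = 1) (hA : ∀ m, A m *ᵥ v = v)
    (hj : A j = vecMulVec v w) : (tensOp A * (cyc d k)ᵀ).trace = 1 := by
  cases k with
  | zero => exact j.elim0
  | succ k =>
    rw [trace_tensOp_mul_transpose_cyc]
    exact trace_list_prod_eq_one_of_vecMulVec_mem hvw (List.forall_mem_ofFn_iff.mpr hA)
      (List.mem_ofFn.mpr ⟨j, hj⟩)

end CyclicShift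

section SwapProjection

variable {d k : ℕ}

lemma conjTranspose_Dk : (Dk d k)ᴴ = (Dk d k)ᵀ := by
  simp [Dk, conjTranspose_smul, transpose_smul, conjTranspose_cyc]

lemma Dk_mul_conjTranspose_Dk :
    Dk d k * (Dk d k)ᴴ = (1 / 2 : ℂ) • 1 + (1 / 4 : ℂ) • (cyc d k + (cyc d k)ᵀ) := by
  rw [conjTranspose_Dk, Dk, transpose_smul, transpose_add, transpose_one, smul_mul_smul_comm,
    add_mul, mul_add, mul_add, cyc_mul_transpose_cyc]
  simp only [one_mul, mul_one]
  module

lemma Dk_mul_tensOp_vecMulVec (v w : Fin d → ℂ) :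
    (Dk d k * tensOp fun _ => vecMulVec v w) = tensOp fun _ => vecMulVec v w := by
  rw [Dk, smul_mul_assoc, add_mul, one_mul, cyc_mul_tensOp_vecMulVec]
  module

lemma tensOp_vecMulVec_mul_conjTranspose_Dk (v w : Fin d → ℂ) :
    (tensOp fun _ => vecMulVec v w) * (Dk d k)ᴴ = tensOp fun _ => vecMulVec v w := by
  rw [conjTranspose_Dk]
  simpa [transpose_tensOp, transpose_vecMulVec] using
    congrArg transpose (Dk_mul_tensOp_vecMulVec (k := k) w v)

end SwapProjection

/-- The homogeneous verification operator `Ω = P + λ (I - P)` with `P = |ψ⟩⟨ψ|`. The parameter `λ`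
may be any complex number. -/
def homogeneousVerification {d : ℕ} (ψ : Fin d → ℂ) (lam : ℂ) : Matrix (Fin d) (Fin d) ℂ :=
  vecMulVec ψ (star ψ) + lam • (1 - vecMulVec ψ (star ψ))

/-- The globally white-noisy ensemble state `(1 - q) (|ψ⟩⟨ψ|)^{⊗k} + q I / d^k`. The noise level `q`
may be any complex number. -/
def whiteNoiseEnsemble {d : ℕ} (k : ℕ) (ψ : Fin d → ℂ) (q : ℂ) :
    Matrix (Fin k → Fin d) (Fin k → Fin d) ℂ :=
  (1 - q) • (tensOp fun _ => vecMulVec ψ (star ψ)) + q • ((d : ℂ) ^ k)⁻¹ • 1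

section Acceptance

variable {d k : ℕ} {ψ : Fin d → ℂ}

lemma natCast_ne_zero_of_dotProduct_eq_one {v w : Fin d → ℂ} (hvw : w ⬝ᵥ v = 1) :
    (d : ℂ) ≠ 0 := by
  intro h
  obtain rfl : d = 0 := Nat.cast_eq_zero.mp h
  simp at hvw

lemma Dk_mul_whiteNoiseEnsemble_mul_conjTranspose_Dk (q : ℂ) :
    Dk d k * whiteNoiseEnsemble k ψ q * (Dk d k)ᴴ
      = (1 - q) • (tensOp fun _ => vecMulVec ψ (star ψ))
        + q • ((d : ℂ) ^ k)⁻¹ • ((1 / 2 : ℂ) • 1 + (1 / 4 : ℂ) • (cyc d k + (cyc d k)ᵀ)) := by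
  simp only [whiteNoiseEnsemble, mul_add, add_mul, mul_smul_comm, smul_mul_assoc, mul_one,
    Dk_mul_tensOp_vecMulVec, tensOp_vecMulVec_mul_conjTranspose_Dk, Dk_mul_conjTranspose_Dk]

lemma trace_tensOp_mul_Dk_whiteNoiseEnsemble (hψ : star ψ ⬝ᵥ ψ = 1) (q : ℂ)
    {A : Fin k → Matrix (Fin d) (Fin d) ℂ} (hA : ∀ m, A m *ᵥ ψ = ψ) {j : Fin k}
    (hj : A j = vecMulVec ψ (star ψ)) :
    (tensOp A * (Dk d k * whiteNoiseEnsemble k ψ q * (Dk d k)ᴴ)).trace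
      = 1 - q + q / 2 * ((∏ m, (A m).trace / d) + 1 / (d : ℂ) ^ k) := by
  simp only [Dk_mul_whiteNoiseEnsemble_mul_conjTranspose_Dk, mul_add, mul_smul_comm, mul_one,
    trace_add, trace_smul, smul_eq_mul, trace_tensOp_mul_tensOp_vecMulVec hψ hA,
    trace_tensOp_mul_cyc_eq_one hψ hA hj, trace_tensOp_mul_transpose_cyc_eq_one hψ hA hj,
    trace_tensOp, Finset.prod_div_distrib, Finset.prod_const, Finset.card_univ, Fintype.card_fin]
  ring

lemma homogeneousVerification_mulVec_self (hψ : star ψ ⬝ᵥ ψ = 1) (lam : ℂ) :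
    homogeneousVerification ψ lam *ᵥ ψ = ψ := by
  simp [homogeneousVerification, add_mulVec, sub_mulVec, smul_mulVec, vecMulVec_mulVec, hψ]

lemma trace_homogeneousVerification_div (hψ : star ψ ⬝ᵥ ψ = 1) (lam : ℂ) :
    (homogeneousVerification ψ lam).trace / d = lam + (1 - lam) / d := by
  have hd := natCast_ne_zero_of_dotProduct_eq_one hψ
  rw [homogeneousVerification, trace_add, trace_smul, trace_sub, trace_one, Fintype.card_fin,
    trace_vecMulVec, dotProduct_comm, hψ, smul_eq_mul]
  field_simp
  ring

theorem stmt13_general {t : ℕ} (ht : t < k) (hψ : star ψ ⬝ᵥ ψ = 1) (q : ℂ)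
    {Ω : Matrix (Fin d) (Fin d) ℂ} (hΩ : Ω *ᵥ ψ = ψ) :
    (tensOp (fun m : Fin k =>
          if m.val < t then Ω else if m.val = t then vecMulVec ψ (star ψ) else 1)
        * (Dk d k * whiteNoiseEnsemble k ψ q * (Dk d k)ᴴ)).trace
      = 1 - q + q / 2 * ((Ω.trace / d) ^ t / d + 1 / (d : ℂ) ^ k) := by
  have hd := natCast_ne_zero_of_dotProduct_eq_one hψ
  have hP : vecMulVec ψ (star ψ) *ᵥ ψ = ψ := by simp [vecMulVec_mulVec, hψ]
  have htrP : (vecMulVec ψ (star ψ)).trace = 1 := by rw [trace_vecMulVec, dotProduct_comm, hψ]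
  rw [trace_tensOp_mul_Dk_whiteNoiseEnsemble hψ q (j := ⟨t, ht⟩)
    (fun m => by split_ifs <;> simp [hΩ, hP]) (by simp)]
  simp only [apply_ite Matrix.trace, apply_ite (· / (d : ℂ)), htrP, trace_one, Fintype.card_fin,
    div_self hd, prod_ite_lt_ite_eq ht, mul_one_div]

end Acceptance

/-- with `P` inserted on factor `t+1`, for the globally white-noisy
ensemble state `η = (1−q)(|ψ⟩⟨ψ|)^{⊗k} + q·I/d^k` with `q = dε/(d−1)`,
`tr[(Ω^{⊗t} ⊗ P ⊗ I^{⊗(k−t−1)}) · D_k η D_k†]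
  = (1−q) + (q/2)[(λ + (1−λ)/d)^t/d + 1/d^k]`. -/
theorem stmt13 (d k t : ℕ) (hd : 2 ≤ d) (hk : 2 ≤ k) (ht1 : 1 ≤ t) (ht2 : t ≤ k - 1)
    (ψ : Fin d → ℂ) (hψ : star ψ ⬝ᵥ ψ = 1)
    (lam ε q : ℝ) (hlam0 : 0 ≤ lam) (hlam1 : lam < 1)
    (hε0 : 0 ≤ ε) (hε1 : ε ≤ ((d : ℝ) - 1) / (d : ℝ))
    (hq : q = (d : ℝ) * ε / ((d : ℝ) - 1))
    (P Ω : Matrix (Fin d) (Fin d) ℂ)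
    (hP : P = vecMulVec ψ (star ψ))
    (hΩ : Ω = P + (lam : ℂ) • (1 - P))
    (η : Matrix (Fin k → Fin d) (Fin k → Fin d) ℂ)
    (hη : η = ((1 - q : ℝ) : ℂ) • tensOp (fun _ : Fin k => P)
        + ((q : ℝ) : ℂ) • ((d : ℂ) ^ k)⁻¹ • (1 : Matrix (Fin k → Fin d) (Fin k → Fin d) ℂ)) :
    (tensOp (fun m : Fin k => if m.val < t then Ω else if m.val = t then P else 1)
        * (Dk d k * η * (Dk d k)ᴴ)).trace
      = ((1 - q + q / 2 * ((lam + (1 - lam) / (d : ℝ)) ^ t / (d : ℝ)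
          + 1 / (d : ℝ) ^ k) : ℝ) : ℂ) := by
  subst hP hΩ hη
  push_cast
  rw [← trace_homogeneousVerification_div hψ lam]
  exact stmt13_general (by omega) hψ q (homogeneousVerification_mulVec_self hψ lam)
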